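/- Let n ≥ 3. Fix orthonormal bases {Y_{1,1},…,Y_{1,n}} of S¹ and {Y_{2,1},…,Y_{2,N}} of S², where N = (n−1)(n+2)/2. There exist ρ > 0 and δ ∈ (0, 1/2) with the following property: for every ellipsoid E ⊂ ℝⁿ with ‖h_E − 1‖_C < δ, there exists a unique vector a = (a₀, a_{1,1},…,a_{1,n}, a_{2,1},…,a_{2,N}) ∈ ℝ^{n(n+3)/2} with |a| < ρ such that a₀ + √n > 0, the function (a₀+√n)²/n + Σ_{i=1}^N a_{2,i} Y_{2,i} is strictly positive on S^{n−1}, and h_E = Σ_{i=1}^n a_{1,i} Y_{1,i} + ( (a₀+√n)²/n + Σ_{i=1}^N a_{2,i} Y_{2,i} )^{1/2}. -/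

import Mathlib

/-!
An ellipsoid `E = v + φ(B)` has support function `h_E(x) = ⟪v, x⟫ + ‖φᵀ x‖`, the sum of an odd
linear function and the square root of a positive definite quadratic form.

Orthonormality makes the `Y1 i` linearly independent on the sphere, and likewise the constant `1`
together with the `Y2 i` (a degree-two harmonic has trace zero, so evaluating at the standard basis
separates off the constant). By dimension count the `Y1 i` span all linear functions, and `1`,
`Y2 i` span all quadratic forms restricted to the sphere; the latter are coordinatized by
`Sym2 (Fin n) → ℝ`, of dimension `(n-1)(n+2)/2 + 1`. This yields the existence of `a`, with
`t = (a₀ + √n)² / n` the coefficient of the constant.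

Uniqueness holds without any smallness: the even and the odd part of `h_E` determine the quadratic
form and the linear function, hence the coefficients. It therefore suffices to take `δ = 1/4` and
`ρ` a large constant: `‖h_E - 1‖ < δ` bounds `v` and `φᵀ`, and the inverses of the two coordinate
isomorphisms are bounded.
-/

open MeasureTheory Metric Set Filter
open scoped RealInnerProductSpace Topology Pointwise NNReal ENNReal

noncomputable section

/-- `Euc n` is Euclidean space `ℝⁿ`. -/
abbrev Euc (n : ℕ) : Type := EuclideanSpace ℝ (Fin n)

/-- `uball k` is `ω_k`, the volume of the unit ball of `ℝ^k`. -/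
def uball (k : ℕ) : ℝ := (volume (closedBall (0 : Euc k) 1)).toReal

/-- The spherical Lebesgue measure on `S^{n-1} ⊂ ℝⁿ`:
the `(n-1)`-dimensional Hausdorff measure. -/
def sphMeas (n : ℕ) : Measure (Euc n) := Measure.hausdorffMeasure ((n : ℝ) - 1)

/-- The support function of a set `K ⊆ ℝⁿ`. -/
def suppFn {n : ℕ} (K : Set (Euc n)) (x : Euc n) : ℝ :=
  sSup ((fun y => ⟪y, x⟫) '' K)

/-- `K` is a convex body: compact, convex, with nonempty interior. -/
def IsConvexBody {n : ℕ} (K : Set (Euc n)) : Prop :=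
  IsCompact K ∧ Convex ℝ K ∧ (interior K).Nonempty

/-- Lebesgue volume of a subset of `ℝⁿ`, as a real number. -/
def vol {n : ℕ} (K : Set (Euc n)) : ℝ := (volume K).toReal

/-- `projSupp K u` is the `(n-1)`-dimensional measure of the orthogonal projection of
`K` onto the hyperplane `u^⊥` (for a unit vector `u`); this is the support function
of the projection body `ΠK`. -/
def projSupp {n : ℕ} (K : Set (Euc n)) (u : Euc n) : ℝ :=
  (Measure.hausdorffMeasure ((n : ℝ) - 1)
    ((fun x : Euc n => x - ⟪x, u⟫ • u) '' K)).toReal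

/-- The projection body `ΠK` of `K`: the convex body whose support function is
`u ↦ V_{n-1}(K | u^⊥)`. -/
def projBody {n : ℕ} (K : Set (Euc n)) : Set (Euc n) :=
  {x | ∀ u ∈ sphere (0 : Euc n) 1, ⟪x, u⟫ ≤ projSupp K u}

/-- The convex body determined by a function `f` on the sphere (the Wulff shape /
intersection of halfspaces); if `f` is a support function this body has support function `f`. -/
def bodyOf {n : ℕ} (f : Euc n → ℝ) : Set (Euc n) :=
  {x | ∀ u ∈ sphere (0 : Euc n) 1, ⟪x, u⟫ ≤ f u}

/-- The 1-homogeneous extension of a function on the unit sphere. -/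
def homExt {n : ℕ} (f : Euc n → ℝ) (x : Euc n) : ℝ := ‖x‖ * f (‖x‖⁻¹ • x)

/-- The Euclidean Laplacian of `F : ℝⁿ → ℝ`. -/
def lapl {n : ℕ} (F : Euc n → ℝ) (x : Euc n) : ℝ :=
  ∑ i : Fin n, fderiv ℝ (fun y => fderiv ℝ F y (EuclideanSpace.single i 1)) x
    (EuclideanSpace.single i 1)

/-- The operator `□f = Δ_{S^{n-1}} f + (n-1) f` on functions on the sphere, realized as the
Euclidean Laplacian of the 1-homogeneous extension (restricted to the sphere). -/
def boxOp {n : ℕ} (f : Euc n → ℝ) (x : Euc n) : ℝ := lapl (homExt f) x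

/-- The cosine transform `Cf(u) = ∫_{S^{n-1}} |u·x| f(x) dx`. -/
def cosT {n : ℕ} (f : Euc n → ℝ) (u : Euc n) : ℝ :=
  ∫ x in sphere (0 : Euc n) 1, |⟪u, x⟫| * f x ∂(sphMeas n)

/-- The spherical Radon (Funk) transform
`Rf(u) = (1/((n-1)ω_{n-1})) ∫_{S^{n-1} ∩ u^⊥} f`, normalized so that `R1 = 1`. -/
def radon {n : ℕ} (f : Euc n → ℝ) (u : Euc n) : ℝ :=
  (1 / (((n : ℝ) - 1) * uball (n - 1))) *
    ∫ x in sphere (0 : Euc n) 1 ∩ {x : Euc n | ⟪x, u⟫ = 0}, f x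
      ∂(Measure.hausdorffMeasure ((n : ℝ) - 2))

/-- The `C²(S^{n-1})` norm of a function on the sphere (computed through its
1-homogeneous extension, which only depends on the values of `f` on the sphere). -/
def C2Norm {n : ℕ} (f : Euc n → ℝ) : ℝ :=
  ⨆ x : sphere (0 : Euc n) 1,
    (|homExt f (x : Euc n)| + ‖fderiv ℝ (homExt f) (x : Euc n)‖ +
      ‖iteratedFDeriv ℝ 2 (homExt f) (x : Euc n)‖)

/-- The sup (`C`) norm of a function on the sphere. -/
def CNorm {n : ℕ} (f : Euc n → ℝ) : ℝ := ⨆ x : sphere (0 : Euc n) 1, |f (x : Euc n)|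

/-- `f` is of class `C²` as a function on the sphere: its 1-homogeneous extension is
`C²` away from the origin. -/
def C2Sph {n : ℕ} (f : Euc n → ℝ) : Prop :=
  ContDiffOn ℝ 2 (homExt f) {(0 : Euc n)}ᶜ

/-- `f` is even on the sphere. -/
def EvenSph {n : ℕ} (f : Euc n → ℝ) : Prop := ∀ x ∈ sphere (0 : Euc n) 1, f (-x) = f x

/-- `f` is the curvature function of `K`: for every convex body `L`, the first variation of
volume satisfies `nV₁(K,L) = ∫_{S^{n-1}} h_L f dx`, i.e. the surface area measure of `K`
has density `f` with respect to spherical Lebesgue measure. -/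
def HasCurvFn {n : ℕ} (K : Set (Euc n)) (f : Euc n → ℝ) : Prop :=
  ∀ L : Set (Euc n), IsConvexBody L →
    Tendsto (fun t : ℝ => (vol (K + t • L) - vol K) / t) (𝓝[>] (0 : ℝ))
      (𝓝 (∫ x in sphere (0 : Euc n) 1, suppFn L x * f x ∂(sphMeas n)))

/-- `K` is a convex body of class `C²₊`: its support function is `C²` and it has a positive
continuous curvature function. -/
def IsC2Plus {n : ℕ} (K : Set (Euc n)) : Prop :=
  IsConvexBody K ∧ C2Sph (suppFn K) ∧
    ∃ f : Euc n → ℝ, ContinuousOn f (sphere (0 : Euc n) 1) ∧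
      (∀ x ∈ sphere (0 : Euc n) 1, 0 < f x) ∧ HasCurvFn K f

/-- `f` is a spherical harmonic of degree `k` on `S^{n-1}`: the restriction to the sphere of a
harmonic polynomial that is homogeneous of degree `k` (equivalently, an eigenfunction of the
Laplace–Beltrami operator with eigenvalue `-k(k+n-2)`; the zero function is allowed). -/
def IsSphHarm {n : ℕ} (k : ℕ) (f : Euc n → ℝ) : Prop :=
  ∃ P : MvPolynomial (Fin n) ℝ, P.IsHomogeneous k ∧
    (∑ i : Fin n, MvPolynomial.pderiv i (MvPolynomial.pderiv i P)) = 0 ∧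
    ∀ x ∈ sphere (0 : Euc n) 1, f x = MvPolynomial.eval (fun i => x i) P

/-- `π_k f = 0`: `f` is `L²(S^{n-1})`-orthogonal to all spherical harmonics of degree `k`. -/
def ProjZero {n : ℕ} (k : ℕ) (f : Euc n → ℝ) : Prop :=
  ∀ Y : Euc n → ℝ, IsSphHarm k Y →
    ∫ x in sphere (0 : Euc n) 1, f x * Y x ∂(sphMeas n) = 0

/-- The multipliers `v_{k,n}` of the spherical Radon transform:
`v_{k,n} = (1·3⋯(k-1)) / ((n-1)(n+1)⋯(n+k-3))` for even `k`, `v_{0,n} = 1`, and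
`v_{k,n} = 0` for odd `k`. -/
def vkn (n k : ℕ) : ℝ :=
  if k % 2 = 0 then ∏ i ∈ Finset.range (k / 2), (2 * (i : ℝ) + 1) / ((n : ℝ) + 2 * i - 1)
  else 0

/-- `D` is the derivative at `t = 0`, in the `C²(S^{n-1})`-norm, of a curve `t ↦ F t` of
functions on the sphere. -/
def HasC2DerivAt {n : ℕ} (F : ℝ → Euc n → ℝ) (D : Euc n → ℝ) : Prop :=
  Tendsto (fun t : ℝ => C2Norm (fun x => (F t x - F 0 x) / t - D x)) (𝓝[≠] (0 : ℝ)) (𝓝 0)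

/-! ### Spherical harmonics of degree one and two -/

/-- Functions that are orthonormal in `L²` of the sphere and continuous there are linearly
independent on the sphere. Integrability of the products comes from `∫ Y i ^ 2 = 1 ≠ 0`. -/
lemma coeff_eq_zero_of_orthonormal {n : ℕ} {ι : Type*} [Fintype ι] [DecidableEq ι]
    (Y : ι → Euc n → ℝ)
    (hc : ∀ i, ContinuousOn (Y i) (sphere (0 : Euc n) 1))
    (hO : ∀ i j, (∫ x in sphere (0 : Euc n) 1, Y i x * Y j x ∂(sphMeas n)) =
      if i = j then 1 else 0) (c : ι → ℝ)
    (h : ∀ x ∈ sphere (0 : Euc n) 1, ∑ i, c i * Y i x = 0) : c = 0 := by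
  have hms : MeasurableSet (sphere (0 : Euc n) 1) := isClosed_sphere.measurableSet
  have hsq : ∀ i, Integrable (fun x => Y i x * Y i x)
      ((sphMeas n).restrict (sphere (0 : Euc n) 1)) := by
    intro i
    by_contra hni
    have := hO i i
    rw [integral_undef hni] at this
    simp at this
  have hint : ∀ i j, Integrable (fun x => Y i x * Y j x)
      ((sphMeas n).restrict (sphere (0 : Euc n) 1)) := by
    intro i j
    refine ((hsq i).add (hsq j)).mono'
      (((hc i).mul (hc j)).aestronglyMeasurable hms) (Eventually.of_forall fun x => ?_)
    simp only [Pi.add_apply, Real.norm_eq_abs]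
    rw [abs_le]
    constructor <;> nlinarith [sq_nonneg (Y i x + Y j x), sq_nonneg (Y i x - Y j x),
      sq_nonneg (Y i x), sq_nonneg (Y j x)]
  funext j
  have h0 : ∫ x in sphere (0 : Euc n) 1, (∑ i, c i * Y i x) * Y j x ∂(sphMeas n) = 0 := by
    rw [setIntegral_congr_fun (g := fun _ => (0 : ℝ)) hms (fun x hx => by simp [h x hx])]
    simp
  simp_rw [Finset.sum_mul, mul_assoc] at h0
  rw [integral_finsetSum _ (fun i _ => (hint i j).const_mul (c i))] at h0
  simp_rw [integral_const_mul, hO] at h0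
  simpa using h0

lemma IsSphHarm.continuousOn {n k : ℕ} {f : Euc n → ℝ} (hf : IsSphHarm k f) :
    ContinuousOn f (sphere (0 : Euc n) 1) := by
  obtain ⟨P, -, -, hP⟩ := hf
  refine ContinuousOn.congr (Continuous.continuousOn ?_) hP
  exact (MvPolynomial.continuous_eval P).comp (by fun_prop)

lemma IsSphHarm.exists_inner {n : ℕ} {f : Euc n → ℝ} (hf : IsSphHarm 1 f) :
    ∃ w : Euc n, ∀ x ∈ sphere (0 : Euc n) 1, f x = ⟪w, x⟫ := by
  obtain ⟨P, hP, -, hfP⟩ := hf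
  have hc : ∀ i, ∃ c : ℝ, MvPolynomial.pderiv i P = MvPolynomial.C c := fun i =>
    ⟨_, (MvPolynomial.totalDegree_eq_zero_iff_eq_C.mp
      (Nat.le_zero.mp (hP.pderiv (i := i)).totalDegree_le))⟩
  choose c hc using hc
  have he := hP.sum_X_mul_pderiv
  refine ⟨WithLp.toLp 2 c, fun x hx => ?_⟩
  have := congrArg (MvPolynomial.eval (fun i => x i)) he
  simp only [hc, map_sum, map_mul, MvPolynomial.eval_X, MvPolynomial.eval_C, one_smul] at this
  rw [hfP x hx, ← this]
  simp [PiLp.inner_apply]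

/-- The quadratic form with symmetric coefficients `g`. -/
def quadForm {n : ℕ} (g : Sym2 (Fin n) → ℝ) (x : Euc n) : ℝ :=
  ∑ i, ∑ j, g s(i, j) * (x i * x j)

/-- The coefficients of a degree-two harmonic are half the (constant) second derivatives of the
polynomial, by Euler's identity applied twice; harmonicity says that the trace vanishes. -/
lemma IsSphHarm.exists_quadForm {n : ℕ} {f : Euc n → ℝ} (hf : IsSphHarm 2 f) :
    ∃ g : Sym2 (Fin n) → ℝ, ∑ i, g s(i, i) = 0 ∧
      ∀ x ∈ sphere (0 : Euc n) 1, f x = quadForm g x := by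
  obtain ⟨P, hP, hlap, hfP⟩ := hf
  have hc : ∀ i j, ∃ c : ℝ,
      MvPolynomial.pderiv i (MvPolynomial.pderiv j P) = MvPolynomial.C c := fun i j =>
    ⟨_, (MvPolynomial.totalDegree_eq_zero_iff_eq_C.mp
      (Nat.le_zero.mp ((hP.pderiv (i := j)).pderiv (i := i)).totalDegree_le))⟩
  choose c hc using hc
  have hsymm : ∀ i j, c i j = c j i := by
    intro i j
    have hcomm : MvPolynomial.pderiv i (MvPolynomial.pderiv j P) =
        MvPolynomial.pderiv j (MvPolynomial.pderiv i P) := by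
      have hb : ⁅(MvPolynomial.pderiv i : Derivation ℝ (MvPolynomial (Fin n) ℝ) _),
          (MvPolynomial.pderiv j : Derivation ℝ (MvPolynomial (Fin n) ℝ) _)⁆ = 0 := by
        apply MvPolynomial.derivation_ext
        intro k
        simp [Derivation.commutator_apply, MvPolynomial.pderiv_X, Pi.single_apply]
        split_ifs <;> simp
      have := congrArg (fun D => D P) hb
      simpa [Derivation.commutator_apply, sub_eq_zero] using this
    rw [hc, hc] at hcomm
    exact MvPolynomial.C_injective _ _ hcomm
  refine ⟨Sym2.lift ⟨fun i j => c i j / 2, fun i j => by simp only [hsymm i j]⟩, ?_, fun x hx => ?_⟩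
  · simp only [hc] at hlap
    rw [← map_sum] at hlap
    have : ∑ i, c i i = 0 := by
      apply MvPolynomial.C_injective (Fin n) ℝ
      simpa using hlap
    simp [← Finset.sum_div, this]
  · have he := congrArg (MvPolynomial.eval (fun i => x i)) hP.sum_X_mul_pderiv
    have he2 := fun j =>
      congrArg (MvPolynomial.eval (fun i => x i)) (hP.pderiv (i := j)).sum_X_mul_pderiv
    simp only [hc, map_sum, map_mul, MvPolynomial.eval_X, MvPolynomial.eval_C, one_smul,
      Nat.add_one_sub_one, map_nsmul] at he he2
    simp_rw [← he2] at he
    rw [hfP x hx]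
    have h2 : MvPolynomial.eval (fun i => x i) P =
        (∑ j, x j * ∑ i, x i * c i j) / 2 := by
      rw [he]; simp
    rw [h2, quadForm, Finset.sum_div]
    refine Finset.sum_congr rfl fun j _ => ?_
    rw [Finset.mul_sum, Finset.sum_div]
    refine Finset.sum_congr rfl fun i _ => ?_
    simp only [Sym2.lift_mk]
    rw [hsymm i j]; ring

lemma quadForm_single {n : ℕ} (g : Sym2 (Fin n) → ℝ) (i : Fin n) :
    quadForm g (EuclideanSpace.single i 1) = g s(i, i) := by
  simp [quadForm]

lemma single_mem_sphere {n : ℕ} (i : Fin n) :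
    (EuclideanSpace.single i 1 : Euc n) ∈ sphere (0 : Euc n) 1 := by simp

lemma IsSphHarm.sum_single {n : ℕ} {f : Euc n → ℝ} (hf : IsSphHarm 2 f) :
    ∑ i, f (EuclideanSpace.single i 1) = 0 := by
  obtain ⟨g, hg, hfg⟩ := hf.exists_quadForm
  rw [← hg]
  exact Finset.sum_congr rfl fun i _ => by
    rw [hfg _ (single_mem_sphere i), quadForm_single]

lemma sum_single_const_add {n : ℕ} {ι : Type*} [Fintype ι] (Y : ι → Euc n → ℝ)
    (hY : ∀ i, IsSphHarm 2 (Y i)) (t : ℝ) (a : ι → ℝ) :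
    ∑ i : Fin n, (t + ∑ k, a k * Y k (EuclideanSpace.single i 1)) = n * t := by
  rw [Finset.sum_add_distrib, Finset.sum_comm]
  simp [← Finset.mul_sum, (hY _).sum_single]

/-- The constant `1` and orthonormal degree-two harmonics are linearly independent on the
sphere. -/
lemma const_add_coeff_eq_zero {n : ℕ} (hn : 0 < n) {ι : Type*} [Fintype ι] [DecidableEq ι]
    (Y : ι → Euc n → ℝ) (hY : ∀ i, IsSphHarm 2 (Y i))
    (hO : ∀ i j, (∫ x in sphere (0 : Euc n) 1, Y i x * Y j x ∂(sphMeas n)) =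
      if i = j then 1 else 0) (t : ℝ) (a : ι → ℝ)
    (h : ∀ x ∈ sphere (0 : Euc n) 1, t + ∑ i, a i * Y i x = 0) : t = 0 ∧ a = 0 := by
  have ht : t = 0 := by
    have := sum_single_const_add Y hY t a
    rw [Finset.sum_eq_zero fun i _ => h _ (single_mem_sphere i)] at this
    have hn' : (n : ℝ) ≠ 0 := by positivity
    simpa [hn'] using this.symm
  subst ht
  exact ⟨rfl, coeff_eq_zero_of_orthonormal Y (fun i => (hY i).continuousOn) hO a
    fun x hx => by simpa using h x hx⟩

/-! ### Coordinates of linear and quadratic functions -/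

/-- Every linear function is a combination of the `Y i` on the sphere, with coefficients bounded
in terms of its norm. -/
lemma exists_linear_coords {n : ℕ} (Y : Fin n → Euc n → ℝ) (hY : ∀ i, IsSphHarm 1 (Y i))
    (hO : ∀ i j, (∫ x in sphere (0 : Euc n) 1, Y i x * Y j x ∂(sphMeas n)) =
      if i = j then 1 else 0) :
    ∃ C : ℝ, 0 ≤ C ∧ ∀ v : Euc n, ∃ a : Fin n → ℝ, (∀ i, |a i| ≤ C * ‖v‖) ∧
      ∀ x ∈ sphere (0 : Euc n) 1, ⟪v, x⟫ = ∑ i, a i * Y i x := by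
  choose w hw using fun i => (hY i).exists_inner
  let L : (Fin n → ℝ) →ₗ[ℝ] Euc n := Fintype.linearCombination ℝ w
  have hL : ∀ a, ∀ x ∈ sphere (0 : Euc n) 1, ⟪L a, x⟫ = ∑ i, a i * Y i x := by
    intro a x hx
    simp only [L, Fintype.linearCombination_apply, sum_inner, real_inner_smul_left]
    exact Finset.sum_congr rfl fun i _ => by rw [hw i x hx]
  have hinj : Function.Injective L := by
    rw [injective_iff_map_eq_zero]
    intro a ha
    exact coeff_eq_zero_of_orthonormal Y (fun i => (hY i).continuousOn) hO a
      fun x hx => by rw [← hL a x hx, ha, inner_zero_left]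
  let e := LinearEquiv.ofInjectiveOfFinrankEq L hinj (by simp)
  have he : ∀ v, L (e.symm v) = v := fun v => e.apply_symm_apply v
  let S : Euc n →L[ℝ] (Fin n → ℝ) := LinearMap.toContinuousLinearMap e.symm.toLinearMap
  refine ⟨‖S‖, norm_nonneg _, fun v => ⟨S v, fun i => ?_, fun x hx => ?_⟩⟩
  · exact (norm_le_pi_norm (S v) i).trans (S.le_opNorm v)
  · rw [← hL _ x hx]
    exact congrArg (fun z => ⟪z, x⟫) (he v).symm

/-- Every quadratic form is a combination of `1` and the `Y i` on the sphere, with coefficients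
bounded in terms of its own. -/
lemma exists_quadForm_coords {n : ℕ} (hn : 0 < n)
    (Y : Fin ((n - 1) * (n + 2) / 2) → Euc n → ℝ) (hY : ∀ i, IsSphHarm 2 (Y i))
    (hO : ∀ i j, (∫ x in sphere (0 : Euc n) 1, Y i x * Y j x ∂(sphMeas n)) =
      if i = j then 1 else 0) :
    ∃ C : ℝ, 0 ≤ C ∧ ∀ g : Sym2 (Fin n) → ℝ,
      ∃ (t : ℝ) (a : Fin ((n - 1) * (n + 2) / 2) → ℝ),
      |t| ≤ C * ‖g‖ ∧ (∀ i, |a i| ≤ C * ‖g‖) ∧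
      ∀ x ∈ sphere (0 : Euc n) 1, quadForm g x = t + ∑ i, a i * Y i x := by
  choose G _ hG using fun i => (hY i).exists_quadForm
  -- coefficients of `x ↦ ‖x‖ ^ 2`
  let D : Sym2 (Fin n) → ℝ :=
    Sym2.lift ⟨fun i j => if i = j then 1 else 0, fun i j => by simp [eq_comm]⟩
  have hD : ∀ x ∈ sphere (0 : Euc n) 1, quadForm D x = 1 := by
    intro x hx
    have h1 : ‖x‖ = 1 := by simpa using hx
    have h2 := EuclideanSpace.real_norm_sq_eq x
    simp only [quadForm, D, Sym2.lift_mk, ite_mul, one_mul, zero_mul, Finset.sum_ite_eq,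
      Finset.mem_univ, if_true]
    rw [h1] at h2
    simpa [sq] using h2.symm
  let L : ((Fin ((n - 1) * (n + 2) / 2) → ℝ) × ℝ) →ₗ[ℝ] (Sym2 (Fin n) → ℝ) :=
    (Fintype.linearCombination ℝ G).coprod (LinearMap.toSpanSingleton ℝ _ D)
  have hL : ∀ p, ∀ x ∈ sphere (0 : Euc n) 1,
      quadForm (L p) x = p.2 + ∑ i, p.1 i * Y i x := by
    intro p x hx
    have h1 : quadForm (L p) x = p.2 * quadForm D x + ∑ k, p.1 k * quadForm (G k) x := by
      simp only [quadForm, L, LinearMap.coprod_apply, Fintype.linearCombination_apply,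
        LinearMap.toSpanSingleton_apply, Pi.add_apply, Pi.smul_apply, Finset.sum_apply,
        smul_eq_mul, Finset.mul_sum, add_mul, Finset.sum_mul, Finset.sum_add_distrib]
      rw [add_comm]
      congr 1
      · simp only [mul_assoc]
      · rw [Finset.sum_comm' (t' := Finset.univ) (s' := fun _ => Finset.univ) (by simp)]
        rw [Finset.sum_comm]
        refine (Finset.sum_congr rfl fun i _ => Finset.sum_comm).trans ?_
        rw [Finset.sum_comm]
        refine Finset.sum_congr rfl fun k _ => ?_
        simp only [mul_assoc]
    rw [h1, hD x hx, mul_one]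
    simp only [hG _ x hx]
  have hinj : Function.Injective L := by
    rw [injective_iff_map_eq_zero]
    intro p hp
    obtain ⟨h1, h2⟩ := const_add_coeff_eq_zero hn Y hY hO p.2 p.1
      fun x hx => by rw [← hL p x hx, hp]; simp [quadForm]
    exact Prod.ext h2 h1
  have hfin : Module.finrank ℝ ((Fin ((n - 1) * (n + 2) / 2) → ℝ) × ℝ) =
      Module.finrank ℝ (Sym2 (Fin n) → ℝ) := by
    obtain ⟨m, rfl⟩ : ∃ m, n = m + 1 := ⟨n - 1, by omega⟩
    simp only [Module.finrank_prod, Module.finrank_fintype_fun_eq_card, Fintype.card_fin,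
      Module.finrank_self, Sym2.card, Nat.choose_two_right, Nat.add_one_sub_one]
    rw [show (m + 1).succ * (m + 1) = m * (m + 1 + 2) + 1 * 2 by
      simp only [Nat.succ_eq_add_one]; ring,
      Nat.add_mul_div_right _ _ (by norm_num)]
  let e := LinearEquiv.ofInjectiveOfFinrankEq L hinj hfin
  have he : ∀ v, L (e.symm v) = v := fun v => e.apply_symm_apply v
  let S := LinearMap.toContinuousLinearMap e.symm.toLinearMap
  refine ⟨‖S‖, norm_nonneg _, fun g => ⟨(S g).2, (S g).1, ?_, fun i => ?_, fun x hx => ?_⟩⟩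
  · exact (norm_snd_le (S g)).trans (S.le_opNorm g)
  · exact ((norm_le_pi_norm (S g).1 i).trans (norm_fst_le (S g))).trans (S.le_opNorm g)
  · rw [← hL _ x hx]
    exact congrArg (fun z => quadForm z x) (he g).symm

/-! ### The support function of an ellipsoid -/

lemma suppFn_ellipsoid {n : ℕ} (φ : Euc n →ₗ[ℝ] Euc n) (v x : Euc n) :
    suppFn ((fun x => v + φ x) '' closedBall (0 : Euc n) 1) x =
      ⟪v, x⟫ + ‖LinearMap.adjoint φ x‖ := by
  refine IsGreatest.csSup_eq ⟨?_, ?_⟩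
  · -- the maximum is attained at the unit vector in direction `φᵀ x` (at `0` if `φᵀ x = 0`)
    refine ⟨_, ⟨‖LinearMap.adjoint φ x‖⁻¹ • LinearMap.adjoint φ x, ?_, rfl⟩, ?_⟩
    · rw [mem_closedBall_zero_iff, norm_smul, norm_inv, norm_norm]
      exact inv_mul_le_one
    · have hz : ⟪φ (LinearMap.adjoint φ x), x⟫ = ‖LinearMap.adjoint φ x‖ ^ 2 := by
        rw [← LinearMap.adjoint_inner_right, real_inner_self_eq_norm_sq]
      simp only [inner_add_left, map_smul, real_inner_smul_left, hz]
      rcases eq_or_ne ‖LinearMap.adjoint φ x‖ 0 with h | h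
      · simp [h]
      · field_simp
  · rintro _ ⟨_, ⟨y, hy, rfl⟩, rfl⟩
    simp only [inner_add_left, ← LinearMap.adjoint_inner_right]
    have hy' : ‖y‖ ≤ 1 := by simpa using hy
    have h1 := real_inner_le_norm y (LinearMap.adjoint φ x)
    have h2 := mul_le_mul_of_nonneg_right hy' (norm_nonneg (LinearMap.adjoint φ x))
    linarith

lemma norm_sq_eq_quadForm {n : ℕ} (A : Euc n →ₗ[ℝ] Euc n) (x : Euc n) :
    ‖A x‖ ^ 2 = quadForm (Sym2.lift ⟨fun i j => ⟪A (EuclideanSpace.single i 1),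
      A (EuclideanSpace.single j 1)⟫, fun _ _ => real_inner_comm _ _⟩) x := by
  have hx : A x = ∑ i, x i • A (EuclideanSpace.single i 1) := by
    conv_lhs => rw [← (EuclideanSpace.basisFun (Fin n) ℝ).sum_repr x]
    simp
  rw [← real_inner_self_eq_norm_sq, hx, quadForm]
  simp only [sum_inner, inner_sum, real_inner_smul_left, real_inner_smul_right, Sym2.lift_mk]
  rw [Finset.sum_comm]
  refine Finset.sum_congr rfl fun i _ => Finset.sum_congr rfl fun j _ => ?_
  rw [real_inner_comm]
  ring

lemma abs_le_CNorm {n : ℕ} {f : Euc n → ℝ} (hf : Continuous f) {x : Euc n}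
    (hx : x ∈ sphere (0 : Euc n) 1) : |f x| ≤ CNorm f := by
  have hb : BddAbove (range fun y : sphere (0 : Euc n) 1 => |f (y : Euc n)|) :=
    (isCompact_range (by fun_prop)).bddAbove
  exact le_ciSup hb ⟨x, hx⟩

/-- The parameters are determined by the function they represent: the odd part gives the linear
function, the even part the quadratic form. -/
lemma parameters_unique {n : ℕ} (hn : 0 < n) {ι : Type*} [Fintype ι] [DecidableEq ι]
    (Y1 : Fin n → Euc n → ℝ) (Y2 : ι → Euc n → ℝ)
    (hY1 : ∀ i, IsSphHarm 1 (Y1 i)) (hY2 : ∀ i, IsSphHarm 2 (Y2 i))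
    (hO1 : ∀ i j, (∫ x in sphere (0 : Euc n) 1, Y1 i x * Y1 j x ∂(sphMeas n)) =
      if i = j then 1 else 0)
    (hO2 : ∀ i j, (∫ x in sphere (0 : Euc n) 1, Y2 i x * Y2 j x ∂(sphMeas n)) =
      if i = j then 1 else 0)
    (t t' : ℝ) (b b' : Fin n → ℝ) (a a' : ι → ℝ)
    (hp : ∀ x ∈ sphere (0 : Euc n) 1, 0 < t + ∑ i, a i * Y2 i x)
    (hp' : ∀ x ∈ sphere (0 : Euc n) 1, 0 < t' + ∑ i, a' i * Y2 i x)
    (h : ∀ x ∈ sphere (0 : Euc n) 1,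
      (∑ i, b i * Y1 i x) + Real.sqrt (t + ∑ i, a i * Y2 i x) =
      (∑ i, b' i * Y1 i x) + Real.sqrt (t' + ∑ i, a' i * Y2 i x)) :
    t = t' ∧ b = b' ∧ a = a' := by
  have hneg : ∀ x ∈ sphere (0 : Euc n) 1, -x ∈ sphere (0 : Euc n) 1 := by simp
  have hodd : ∀ i, ∀ x ∈ sphere (0 : Euc n) 1, Y1 i (-x) = - Y1 i x := by
    intro i x hx
    obtain ⟨w, hw⟩ := (hY1 i).exists_inner
    rw [hw _ hx, hw _ (hneg x hx), inner_neg_right]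
  have heven : ∀ i, ∀ x ∈ sphere (0 : Euc n) 1, Y2 i (-x) = Y2 i x := by
    intro i x hx
    obtain ⟨g, -, hg⟩ := (hY2 i).exists_quadForm
    rw [hg _ hx, hg _ (hneg x hx)]
    simp [quadForm]
  have hE : ∀ x ∈ sphere (0 : Euc n) 1,
      (∑ i, b i * Y1 i x = ∑ i, b' i * Y1 i x) ∧
      t + ∑ i, a i * Y2 i x = t' + ∑ i, a' i * Y2 i x := by
    intro x hx
    have h1 := h x hx
    have h2 := h (-x) (hneg x hx)
    simp only [hodd _ x hx, heven _ x hx, mul_neg, Finset.sum_neg_distrib] at h2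
    refine ⟨by linarith, ?_⟩
    exact (Real.sqrt_inj (hp x hx).le (hp' x hx).le).mp (by linarith)
  have hb := coeff_eq_zero_of_orthonormal Y1 (fun i => (hY1 i).continuousOn) hO1 (b - b')
    fun x hx => by simp [sub_mul, (hE x hx).1]
  obtain ⟨ht, ha⟩ := const_add_coeff_eq_zero hn Y2 hY2 hO2 (t - t') (a - a')
    fun x hx => by
      have := (hE x hx).2
      simp only [Pi.sub_apply, sub_mul, Finset.sum_sub_distrib]
      linarith
  exact ⟨sub_eq_zero.mp ht, sub_eq_zero.mp hb, sub_eq_zero.mp ha⟩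

/-- Parametrization of ellipsoids near the unit ball: given orthonormal bases
of `S¹` and `S²`, every ellipsoid `E` with `‖h_E - 1‖_C < δ` admits a unique small parameter
vector `a` with `h_E = Σ a_{1,i} Y_{1,i} + ((a₀+√n)²/n + Σ a_{2,i} Y_{2,i})^{1/2}`. -/
theorem ellipsoid_parametrization (n : ℕ) (hn : 3 ≤ n)
    (Y1 : Fin n → Euc n → ℝ) (Y2 : Fin ((n - 1) * (n + 2) / 2) → Euc n → ℝ)
    (hY1 : ∀ i, IsSphHarm 1 (Y1 i)) (hY2 : ∀ i, IsSphHarm 2 (Y2 i))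
    (hO1 : ∀ i j, (∫ x in sphere (0 : Euc n) 1, Y1 i x * Y1 j x ∂(sphMeas n)) =
      if i = j then 1 else 0)
    (hO2 : ∀ i j, (∫ x in sphere (0 : Euc n) 1, Y2 i x * Y2 j x ∂(sphMeas n)) =
      if i = j then 1 else 0) :
    ∃ ρ : ℝ, 0 < ρ ∧ ∃ δ : ℝ, 0 < δ ∧ δ < 1 / 2 ∧
      ∀ E : Set (Euc n),
        (∃ (φ : Euc n ≃ₗ[ℝ] Euc n) (v : Euc n),
          E = (fun x => v + φ x) '' closedBall (0 : Euc n) 1) →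
        CNorm (fun x => suppFn E x - 1) < δ →
        ∃! a : ℝ × (Fin n → ℝ) × (Fin ((n - 1) * (n + 2) / 2) → ℝ),
          Real.sqrt (a.1 ^ 2 + ∑ i, a.2.1 i ^ 2 + ∑ i, a.2.2 i ^ 2) < ρ ∧
          0 < a.1 + Real.sqrt n ∧
          (∀ x ∈ sphere (0 : Euc n) 1,
            0 < (a.1 + Real.sqrt n) ^ 2 / n + ∑ i, a.2.2 i * Y2 i x) ∧
          ∀ x ∈ sphere (0 : Euc n) 1,
            suppFn E x = (∑ i, a.2.1 i * Y1 i x) +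
              Real.sqrt ((a.1 + Real.sqrt n) ^ 2 / n + ∑ i, a.2.2 i * Y2 i x) := by
  have hn0 : 0 < n := by omega
  have hnR : (0 : ℝ) < n := by exact_mod_cast hn0
  obtain ⟨C1, hC1, hlin⟩ := exists_linear_coords Y1 hY1 hO1
  obtain ⟨C2, hC2, hquad⟩ := exists_quadForm_coords hn0 Y2 hY2 hO2
  -- the bound `h_E < 2` yields `‖v‖ ≤ 2` and coefficients of the quadratic form at most `4`
  set R : ℝ := n * (C2 * 4 + 1) + n * (C1 * 2) ^ 2 +
    ((n - 1) * (n + 2) / 2 : ℕ) * (C2 * 4) ^ 2 + 1 with hR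
  have hRpos : 0 < R := by positivity
  refine ⟨Real.sqrt R, Real.sqrt_pos.mpr hRpos, 1 / 4, by norm_num, by norm_num, ?_⟩
  rintro E ⟨φ, v, rfl⟩ hE
  let A : Euc n →ₗ[ℝ] Euc n := LinearMap.adjoint (φ : Euc n →ₗ[ℝ] Euc n)
  have hsupp : ∀ x, suppFn ((fun x => v + φ x) '' closedBall (0 : Euc n) 1) x =
      ⟪v, x⟫ + ‖A x‖ := fun x => suppFn_ellipsoid (φ : Euc n →ₗ[ℝ] Euc n) v x
  have hA : Continuous A := A.continuous_of_finiteDimensional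
  simp only [hsupp] at hE ⊢
  have hlt : ∀ x ∈ sphere (0 : Euc n) 1, |⟪v, x⟫ + ‖A x‖ - 1| < 1 / 4 := fun x hx =>
    (abs_le_CNorm (f := fun x => ⟪v, x⟫ + ‖A x‖ - 1) (by fun_prop) hx).trans_lt hE
  have hneg : ∀ x ∈ sphere (0 : Euc n) 1, -x ∈ sphere (0 : Euc n) 1 := by simp
  have hAx : ∀ x ∈ sphere (0 : Euc n) 1, 0 < ‖A x‖ ∧ ‖A x‖ ≤ 2 := by
    intro x hx
    have h1 := abs_lt.mp (hlt x hx)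
    have h2 := abs_lt.mp (hlt (-x) (hneg x hx))
    rw [inner_neg_right, map_neg, norm_neg] at h2
    constructor <;> linarith [h1.1, h1.2, h2.1, h2.2]
  have hv : ‖v‖ ≤ 2 := by
    rcases eq_or_ne v 0 with h | h
    · simp [h]
    · have hv0 : ‖v‖ ≠ 0 := norm_ne_zero_iff.mpr h
      have hx : ‖v‖⁻¹ • v ∈ sphere (0 : Euc n) 1 := by
        rw [mem_sphere_zero_iff_norm, norm_smul, norm_inv, norm_norm, inv_mul_cancel₀ hv0]
      have h1 := (abs_lt.mp (hlt _ hx)).2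
      have h2 : ⟪v, ‖v‖⁻¹ • v⟫ = ‖v‖ := by
        rw [real_inner_smul_right, real_inner_self_eq_norm_sq]
        field_simp
      rw [h2] at h1
      linarith [norm_nonneg (A (‖v‖⁻¹ • v))]
  obtain ⟨b, hb, hbv⟩ := hlin v
  obtain ⟨t, a, ht, ha, hta⟩ := hquad (Sym2.lift ⟨fun i j => ⟪A (EuclideanSpace.single i 1),
      A (EuclideanSpace.single j 1)⟫, fun _ _ => real_inner_comm _ _⟩)
  simp only [← norm_sq_eq_quadForm] at hta
  have hg : ‖(Sym2.lift ⟨fun i j => ⟪A (EuclideanSpace.single i 1),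
      A (EuclideanSpace.single j 1)⟫, fun _ _ => real_inner_comm _ _⟩ :
        Sym2 (Fin n) → ℝ)‖ ≤ 4 := by
    rw [pi_norm_le_iff_of_nonneg (by norm_num)]
    intro s
    induction s with
    | h i j =>
      simp only [Sym2.lift_mk]
      refine (norm_inner_le_norm _ _).trans ?_
      have h1 := (hAx _ (single_mem_sphere i)).2
      have h2 := (hAx _ (single_mem_sphere j)).2
      calc _ ≤ (2 : ℝ) * 2 := mul_le_mul h1 h2 (norm_nonneg _) (by norm_num)
        _ = 4 := by norm_num
  have htpos : 0 < t := by
    have h1 := sum_single_const_add Y2 hY2 t a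
    have h2 : 0 < ∑ i : Fin n, (t + ∑ k, a k * Y2 k (EuclideanSpace.single i 1)) := by
      refine Finset.sum_pos (fun i _ => ?_) ⟨⟨0, hn0⟩, Finset.mem_univ _⟩
      rw [← hta _ (single_mem_sphere i)]
      exact pow_pos (hAx _ (single_mem_sphere i)).1 2
    rw [h1] at h2
    exact (mul_pos_iff_of_pos_left hnR).mp h2
  have htC : t ≤ C2 * 4 :=
    (le_abs_self t).trans (ht.trans (mul_le_mul_of_nonneg_left hg hC2))
  have hsn : Real.sqrt n ^ 2 = n := Real.sq_sqrt hnR.le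
  have hst : Real.sqrt t ^ 2 = t := Real.sq_sqrt htpos.le
  -- `a₀` solves `(a₀ + √n)² / n = t`
  have ha0 : ((Real.sqrt n * (Real.sqrt t - 1)) + Real.sqrt n) ^ 2 / n = t := by
    rw [show Real.sqrt n * (Real.sqrt t - 1) + Real.sqrt n = Real.sqrt n * Real.sqrt t by ring,
      mul_pow, hsn, hst]
    field_simp
  have hpos : ∀ x ∈ sphere (0 : Euc n) 1, 0 < t + ∑ i, a i * Y2 i x := fun x hx => by
    rw [← hta x hx]
    exact pow_pos (hAx x hx).1 2
  have heq : ∀ x ∈ sphere (0 : Euc n) 1, ⟪v, x⟫ + ‖A x‖ =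
      (∑ i, b i * Y1 i x) + Real.sqrt (t + ∑ i, a i * Y2 i x) := fun x hx => by
    rw [← hta x hx, Real.sqrt_sq (norm_nonneg _), hbv x hx]
  refine ⟨(Real.sqrt n * (Real.sqrt t - 1), b, a), ⟨?_, ?_, ?_, ?_⟩, ?_⟩
  · refine Real.sqrt_lt_sqrt (by positivity) ?_
    have h0 : (Real.sqrt n * (Real.sqrt t - 1)) ^ 2 ≤ n * (C2 * 4 + 1) := by
      rw [mul_pow, hsn]
      refine mul_le_mul_of_nonneg_left ?_ hnR.le
      nlinarith [Real.sqrt_nonneg t]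
    have h1 : ∑ i, b i ^ 2 ≤ n * (C1 * 2) ^ 2 := by
      refine (Finset.sum_le_card_nsmul _ _ ((C1 * 2) ^ 2) fun i _ => ?_).trans (by simp)
      exact sq_le_sq.mpr (((hb i).trans (mul_le_mul_of_nonneg_left hv hC1)).trans
        (le_abs_self _))
    have h2 : ∑ i, a i ^ 2 ≤ ((n - 1) * (n + 2) / 2 : ℕ) * (C2 * 4) ^ 2 := by
      refine (Finset.sum_le_card_nsmul _ _ ((C2 * 4) ^ 2) fun i _ => ?_).trans (by simp)
      exact sq_le_sq.mpr (((ha i).trans (mul_le_mul_of_nonneg_left hg hC2)).trans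
        (le_abs_self _))
    rw [hR]
    linarith
  · have := mul_pos (Real.sqrt_pos.mpr hnR) (Real.sqrt_pos.mpr htpos)
    show 0 < Real.sqrt n * (Real.sqrt t - 1) + Real.sqrt n
    linarith
  · simpa only [ha0] using hpos
  · simpa only [ha0] using heq
  · rintro ⟨a0', b', a'⟩ ⟨-, h0', hpos', heq'⟩
    obtain ⟨h1, h2, h3⟩ := parameters_unique hn0 Y1 Y2 hY1 hY2 hO1 hO2 _ t b' b a' a hpos' hpos
      fun x hx => by rw [← heq x hx]; exact (heq' x hx).symm
    refine Prod.ext ?_ (Prod.ext h2 h3)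
    have h4 : (a0' + Real.sqrt n) ^ 2 = (Real.sqrt n * Real.sqrt t) ^ 2 := by
      rw [mul_pow, hsn, hst, ← h1]
      field_simp
    have h5 := (sq_eq_sq₀ (le_of_lt h0') (by positivity)).mp h4
    show a0' = Real.sqrt n * (Real.sqrt t - 1)
    linarith
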